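/- Let V be a uniform ℤ-graded vertex algebra. Then the bilinear operation (a, b) ↦ a(0)b descends to the quotient vector space Q = V / L_{−1}V (i.e. a(0)b + L_{−1}V depends only on the classes of a and b modulo L_{−1}V), and Q equipped with the induced bracket [ā, b̄] = \overline{a(0)b} is a complex Lie algebra: the induced bracket is bilinear, alternating, and satisfies the Jacobi identity. -/

import Mathlib

/-- A uniform ℤ-graded vertex algebra: a ℤ-graded complex vector space with bilinear
products `a(n)b`, a translation operator `L₋₁`, and a vacuum `1`, satisfying uniform
locality, translation covariance, the vacuum-field axiom and the creation axiom. -/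
structure UniformVertexAlgebra (V : Type*) [AddCommGroup V] [Module ℂ V] where
  /-- The grading `V = ⊕_{n ∈ ℤ} V_n`. -/
  grading : ℤ → Submodule ℂ V
  /-- The grading is an (internal) direct sum decomposition of `V`. -/
  decomposition : DirectSum.Decomposition grading
  /-- The bilinear products: `mul n a b` is `a(n)b`. -/
  mul : ℤ → V →ₗ[ℂ] V →ₗ[ℂ] V
  /-- The translation operator `L₋₁`. -/
  T : V →ₗ[ℂ] V
  /-- The vacuum vector `1`. -/
  vac : V
  vac_mem : vac ∈ grading 0
  /-- `a(n)` maps `V_m` into `V_{m−n+k−1}` whenever `a ∈ V_k`. -/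
  mul_mem : ∀ (n k m : ℤ) (a c : V), a ∈ grading k → c ∈ grading m →
    mul n a c ∈ grading (m - n + k - 1)
  /-- `L₋₁` has degree one. -/
  T_mem : ∀ (n : ℤ) (a : V), a ∈ grading n → T a ∈ grading (n + 1)
  /-- Uniform locality, in coefficient form: `(z−t)^N [a(z), b(t)] = 0`. -/
  locality : ∀ a b : V, ∃ N : ℕ, ∀ (p q : ℤ) (c : V),
    ∑ r ∈ Finset.range (N + 1),
      ((-1 : ℂ) ^ r * (N.choose r : ℂ)) •
        (mul (p + N - r) a (mul (q + r) b c) - mul (q + r) b (mul (p + N - r) a c)) = 0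
  /-- Translation covariance: `[L₋₁, a(n)] = −n·a(n−1)`. -/
  translation : ∀ (n : ℤ) (a c : V),
    T (mul n a c) - mul n a (T c) = -(n • mul (n - 1) a c)
  T_vac : T vac = 0
  /-- Vacuum field: `1(n)c = c` if `n = −1` and `0` otherwise. -/
  vac_field : ∀ (n : ℤ) (c : V), mul n vac c = if n = -1 then c else 0
  /-- Creation: `a(n)1 = 0` for `n ≥ 0`. -/
  creation : ∀ (n : ℤ) (a : V), 0 ≤ n → mul n a vac = 0
  /-- Creation: `a(−1)1 = a`. -/
  create_self : ∀ a : V, mul (-1) a vac = a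

/-- The locality statement for a pair `(a,b)` with a specific witness `N`. -/
def UniformVertexAlgebra.LocalityAt {V : Type*} [AddCommGroup V] [Module ℂ V]
    (A : UniformVertexAlgebra V) (a b : V) (N : ℕ) : Prop :=
  ∀ (p q : ℤ) (c : V),
    ∑ r ∈ Finset.range (N + 1),
      ((-1 : ℂ) ^ r * (N.choose r : ℂ)) •
        (A.mul (p + N - r) a (A.mul (q + r) b c) -
          A.mul (q + r) b (A.mul (p + N - r) a c)) = 0

/-!
The commutator `[d(z), e(t)]` of mutually local fields is killed by a power of `z - t`, so for a
vector `v` the function `r ↦ [d(-1-r), e(r)]v` on an antidiagonal is killed by an iterated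
difference, i.e. it is a polynomial in `r`. If both fields are translation covariant and regular on
the vacuum `v`, its class modulo `L₋₁V` is constant for `r ≥ 0`, hence constant, and comparing
`r = -1` with `r = 0` gives `d(0)e(-1)v + e(0)d(-1)v ∈ L₋₁V`. For the fields of `a` and `b` this is
skew-symmetry of `a(0)b` modulo `L₋₁V`, which together with `a(0)L₋₁ = L₋₁a(0)` lets the bracket
descend. The Jacobi identity is the same statement for the fields `[a(0), b(z)]` and `c(z)`, which
are mutually local by Dong's lemma.
-/

open fwdDiff_aux

attribute [local instance] LieRing.ofAssociativeRing

section ForwardDifference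

variable {M M' G G' : Type*} [AddCommMonoid M] [AddCommMonoid M'] [AddCommGroup G]
  [AddCommGroup G']

lemma fwdDiff_commute (g h : M) : Function.Commute (fwdDiff (G := G) g) (fwdDiff h) := fun f ↦ by
  ext x
  simp only [fwdDiff, add_right_comm x g h]
  abel

lemma fwdDiff_iter_neg (h : M) (n : ℕ) (f : M → G) : (fwdDiff h)^[n] (-f) = -(fwdDiff h)^[n] f := by
  simpa only [coe_fwdDiffₗ_pow] using map_neg (fwdDiffₗ M G h ^ n) f

lemma fwdDiff_iter_comp_of_semiconj {h : M} {h' : M'} {φ : M' → M} {ψ : M' → G →+ G'}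
    (hφ : ∀ x, φ (x + h') = φ x + h) (hψ : ∀ x, ψ (x + h') = ψ x) (f : M → G) (n : ℕ) :
    (fwdDiff h')^[n] (fun x ↦ ψ x (f (φ x))) = fun x ↦ ψ x ((fwdDiff h)^[n] f (φ x)) := by
  have semiconj : Function.Semiconj (fun (f : M → G) x ↦ ψ x (f (φ x))) (fwdDiff h)
      (fwdDiff h') := fun f ↦ by
    ext x
    simp only [fwdDiff, hφ, hψ, map_sub]
  exact ((semiconj.iterate_right n).eq f).symm

lemma fwdDiff_iter_comp_eq_zero {h : M} {h' : M'} {f : M → G} {n : ℕ} (hf : (fwdDiff h)^[n] f = 0)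
    {φ : M' → M} {ψ : M' → G →+ G'} (hφ : ∀ x, φ (x + h') = φ x + h)
    (hψ : ∀ x, ψ (x + h') = ψ x) : (fwdDiff h')^[n] (fun x ↦ ψ x (f (φ x))) = 0 := by
  rw [fwdDiff_iter_comp_of_semiconj hφ hψ, hf]
  exact funext fun x ↦ map_zero (ψ x)

lemma fwdDiff_add_iter_eq_zero {g h : M} {f : M → G} {i j : ℕ} (hg : (fwdDiff g)^[i] f = 0)
    (hh : (fwdDiff h)^[j] f = 0) : (fwdDiff (g + h))^[i + j] f = 0 := by
  have fwdDiff_add_eq :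
      fwdDiffₗ M G (g + h) = shiftₗ M G h * fwdDiffₗ M G g + fwdDiffₗ M G h := by
    ext f x
    simp [shiftₗ_apply, fwdDiff, add_assoc, add_comm g h]
  have commute (x y : M) : Commute (fwdDiffₗ M G x) (fwdDiffₗ M G y) :=
    LinearMap.ext (fwdDiff_commute x y).eq
  have shift_commute (x : M) : Commute (shiftₗ M G h) (fwdDiffₗ M G x) :=
    (commute h x).add_left (.one_left _)
  rw [← coe_fwdDiffₗ_pow] at hg hh ⊢
  rw [fwdDiff_add_eq]
  refine Ideal.add_pow_mem_of_pow_mem_of_le_of_commute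
    (Ideal.torsionOf (Module.End ℤ (M → G)) (M → G) f) ?_ hh (Nat.le_succ _)
    ((shift_commute h).mul_left (commute g h))
  rw [(shift_commute g).mul_pow]
  exact Ideal.mul_mem_left _ _ hg

lemma fwdDiff_add_iter_sub_eq_zero {g h : M} {F₁ F₂ : M → G} {i j k : ℕ}
    (hF : (fwdDiff g)^[i] (F₁ - F₂) = 0) (hF₁ : (fwdDiff (g + h))^[k] F₁ = 0)
    (hF₂ : (fwdDiff h)^[j] F₂ = 0) : (fwdDiff (g + h))^[i + j + k] (F₁ - F₂) = 0 := by
  have iter_zero (x : M) (n : ℕ) : (fwdDiff x)^[n] (0 : M → G) = 0 :=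
    Function.iterate_fixed (fwdDiff_const x 0) n
  have iter_comm (x y : M) (m n : ℕ) (f : M → G) :
      (fwdDiff x)^[m] ((fwdDiff y)^[n] f) = (fwdDiff y)^[n] ((fwdDiff x)^[m] f) :=
    (fwdDiff_commute x y).iterate_iterate m n f
  have eq_neg : (fwdDiff (g + h))^[k] (F₁ - F₂) = -(fwdDiff (g + h))^[k] F₂ := by
    rw [sub_eq_add_neg, fwdDiff_iter_add, hF₁, zero_add, fwdDiff_iter_neg]
  rw [Function.iterate_add_apply]
  refine fwdDiff_add_iter_eq_zero ?_ ?_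
  · rw [iter_comm, hF, iter_zero]
  · rw [eq_neg, fwdDiff_iter_neg, iter_comm, hF₂, iter_zero, neg_zero]

lemma eq_zero_of_fwdDiff_iter_eq_zero {f : ℤ → G} {n : ℕ} (hf : (fwdDiff 1)^[n] f = 0)
    (hf_nonneg : ∀ r, 0 ≤ r → f r = 0) : f = 0 := by
  induction n generalizing f with
  | zero => exact hf
  | succ n ih =>
    have fwdDiff_eq_zero : fwdDiff 1 f = 0 := ih hf fun r hr ↦ by
      rw [fwdDiff, hf_nonneg r hr, hf_nonneg (r + 1) (by lia), sub_zero]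
    have periodic : Function.Periodic f 1 := fun r ↦ sub_eq_zero.mp (congrFun fwdDiff_eq_zero r)
    ext r
    simpa [hf_nonneg 0 le_rfl] using periodic.int_mul_eq r

end ForwardDifference

/-- Mutual locality `(z - t)^N [a(z), b(t)] = 0` of two formal distributions, given by their
coefficients in a Lie ring. Multiplication by `z - t` sends the coefficients `F (p, q)` to
`F (p + 1, q) - F (p, q + 1)`, which up to sign and an index shift is the forward difference in the
direction `(-1, 1)`. -/
def MutuallyLocal {L : Type*} [LieRing L] (a b : ℤ → L) : Prop :=
  ∃ N : ℕ, (fwdDiff ((-1, 1) : ℤ × ℤ))^[N] (fun x ↦ ⁅a x.1, b x.2⁆) = 0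

lemma mutuallyLocal_of_sum_eq_zero {L : Type*} [LieRing L] {a b : ℤ → L} {N : ℕ}
    (h : ∀ p q : ℤ, ∑ r ∈ Finset.range (N + 1),
      ((-1 : ℤ) ^ r * N.choose r) • ⁅a (p + N - r), b (q + r)⁆ = 0) : MutuallyLocal a b := by
  refine ⟨N, funext fun ⟨p, q⟩ ↦ ?_⟩
  rw [fwdDiff_iter_eq_sum_shift, Pi.zero_apply, ← smul_zero ((-1 : ℤ) ^ N), ← h (p - N) q,
    Finset.smul_sum]
  refine Finset.sum_congr rfl fun r hr ↦ ?_
  have sign : (-1 : ℤ) ^ (N - r) = (-1) ^ N * (-1) ^ r := by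
    rw [← Nat.sub_add_cancel (Finset.mem_range_succ_iff.mp hr), Nat.add_sub_cancel, pow_add,
      mul_assoc, ← mul_pow, neg_one_mul, neg_neg, one_pow, mul_one]
  rw [smul_smul, ← mul_assoc, sign]
  simp [sub_eq_add_neg]

/-- Dong's lemma. By the Jacobi identity `[[a(z₁), b(z₂)], c(z₃)] = F₁ - F₂`, and a power of
`z₂ - z₃` kills `F₁`. What it leaves of `F₂` is killed by powers of `z₂ - z₁` and of `z₁ - z₃`,
hence by a power of their sum `z₂ - z₃`. -/
theorem MutuallyLocal.lie {L : Type*} [LieRing L] {a b c : ℤ → L} (hba : MutuallyLocal b a)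
    (hac : MutuallyLocal a c) (hbc : MutuallyLocal b c) (m : ℤ) :
    MutuallyLocal (fun n ↦ ⁅a m, b n⁆) c := by
  obtain ⟨i, hi⟩ := hba
  obtain ⟨j, hj⟩ := hac
  obtain ⟨k, hk⟩ := hbc
  let ad (x : L) : L →+ L := (LieAlgebra.ad ℤ L x).toAddMonoidHom
  let F₁ : ℤ × ℤ × ℤ → L := fun x ↦ ⁅a x.1, ⁅b x.2.1, c x.2.2⁆⁆
  let F₂ : ℤ × ℤ × ℤ → L := fun x ↦ ⁅b x.2.1, ⁅a x.1, c x.2.2⁆⁆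
  have jacobi (x : ℤ × ℤ × ℤ) : (F₁ - F₂) x = ⁅⁅a x.1, b x.2.1⁆, c x.2.2⁆ := (lie_lie ..).symm
  have hF : (fwdDiff ((1, -1, 0) : ℤ × ℤ × ℤ))^[i] (F₁ - F₂) = 0 := by
    have jacobi' : F₁ - F₂ = fun x ↦ ad (c x.2.2) ⁅b x.2.1, a x.1⁆ := funext fun x ↦ by
      rw [jacobi, ← lie_skew, ← lie_neg, lie_skew]
      rfl
    rw [jacobi']
    exact fwdDiff_iter_comp_eq_zero hi (φ := fun x : ℤ × ℤ × ℤ ↦ (x.2.1, x.1))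
      (ψ := fun x ↦ ad (c x.2.2)) (fun _ ↦ rfl) (fun _ ↦ by simp)
  have hF₁ : (fwdDiff ((1, -1, 0) + (-1, 0, 1) : ℤ × ℤ × ℤ))^[k] F₁ = 0 :=
    fwdDiff_iter_comp_eq_zero hk (φ := Prod.snd) (ψ := fun x : ℤ × ℤ × ℤ ↦ ad (a x.1))
      (fun _ ↦ by simp) (fun _ ↦ by simp)
  have hF₂ : (fwdDiff ((-1, 0, 1) : ℤ × ℤ × ℤ))^[j] F₂ = 0 :=
    fwdDiff_iter_comp_eq_zero hj (φ := fun x : ℤ × ℤ × ℤ ↦ (x.1, x.2.2))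
      (ψ := fun x ↦ ad (b x.2.1)) (fun _ ↦ rfl) (fun _ ↦ by simp)
  refine ⟨i + j + k, ?_⟩
  have lie_lie_eq_zero := fwdDiff_iter_comp_eq_zero (fwdDiff_add_iter_sub_eq_zero hF hF₁ hF₂)
    (h' := ((-1, 1) : ℤ × ℤ)) (φ := fun x ↦ (m, x)) (ψ := fun _ ↦ AddMonoidHom.id L)
    (fun _ ↦ by simp) (fun _ ↦ rfl)
  simpa only [jacobi, AddMonoidHom.id_apply] using lie_lie_eq_zero

/-- A translation-covariant field `d(z) = ∑ d(n) z^{-n-1}` with `d(z)v` regular at `z = 0`, where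
`T` plays the role of the translation operator `L₋₁` and `v` that of the vacuum. -/
structure IsCreativeField {K V : Type*} [Ring K] [AddCommGroup V] [Module K V]
    (T : Module.End K V) (v : V) (d : ℤ → Module.End K V) : Prop where
  translation : ∀ n, ⁅T, d n⁆ = -(n • d (n - 1))
  apply_vac : ∀ n, 0 ≤ n → d n v = 0

namespace IsCreativeField

section Ring

variable {K V : Type*} [Ring K] [AddCommGroup V] [Module K V] {T : Module.End K V} {v : V}
  {d e : ℤ → Module.End K V}

lemma T_apply (hd : IsCreativeField T v d) (n : ℤ) (x : V) :
    T (d n x) = d n (T x) - n • d (n - 1) x := by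
  have lie_apply : T (d n x) - d n (T x) = -(n • d (n - 1) x) :=
    LinearMap.congr_fun (hd.translation n) x
  rw [sub_eq_iff_eq_add'.mp lie_apply, ← sub_eq_add_neg]

lemma lie_zero (hd : IsCreativeField T v d) (he : IsCreativeField T v e) :
    IsCreativeField T v (fun n ↦ ⁅d 0, e n⁆) where
  translation n := by
    rw [leibniz_lie, hd.translation, he.translation, zero_smul, neg_zero, zero_lie, zero_add,
      lie_neg, lie_zsmul]
  apply_vac n hn := by
    simp [Ring.lie_def, hd.apply_vac 0 le_rfl, he.apply_vac n hn]

lemma zsmul_add_zsmul_mem_range (hd : IsCreativeField T v d) (he : IsCreativeField T v e)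
    (hT : T v = 0) (m n : ℤ) :
    m • d (m - 1) (e n v) + n • d m (e (n - 1) v) ∈ LinearMap.range T := by
  refine ⟨-d m (e n v), ?_⟩
  rw [map_neg, hd.T_apply, he.T_apply, hT, map_zero, zero_sub, map_neg, map_zsmul]
  abel

end Ring

variable {K V : Type*} [Field K] [CharZero K] [AddCommGroup V] [Module K V]
  {T : Module.End K V} {v : V} {d e : ℤ → Module.End K V}

lemma mkQ_antidiagonal_succ (hd : IsCreativeField T v d) (he : IsCreativeField T v e)
    (hT : T v = 0) {r : ℤ} (hr : 0 ≤ r) :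
    (LinearMap.range T).mkQ (e (r + 1) (d (-1 - (r + 1)) v)) =
      (LinearMap.range T).mkQ (e r (d (-1 - r) v)) := by
  have mem_range := he.zsmul_add_zsmul_mem_range hd hT (r + 1) (-1 - r)
  rw [← Submodule.ker_mkQ (LinearMap.range T), LinearMap.mem_ker, map_add, map_zsmul, map_zsmul,
    add_sub_cancel_right, sub_sub, show -1 - r = -(r + 1) by ring, neg_smul, ← sub_eq_add_neg,
    ← smul_sub, ← Int.cast_smul_eq_zsmul K, smul_eq_zero] at mem_range
  rw [show -1 - r = -(r + 1) by ring]
  have succ_ne_zero : ((r + 1 : ℤ) : K) ≠ 0 := Int.cast_ne_zero.mpr (by lia)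
  exact (sub_eq_zero.mp (mem_range.resolve_left succ_ne_zero)).symm

theorem skew_symm (hd : IsCreativeField T v d) (he : IsCreativeField T v e) (hT : T v = 0)
    (hloc : MutuallyLocal d e) :
    d 0 (e (-1) v) + e 0 (d (-1) v) ∈ LinearMap.range T := by
  let π := (LinearMap.range T).mkQ
  let g : ℤ → V ⧸ LinearMap.range T := fun r ↦ π (⁅d (-1 - r), e r⁆ v)
  have g_of_nonneg {r : ℤ} (hr : 0 ≤ r) : g r = -π (e r (d (-1 - r) v)) := by
    simp [g, Ring.lie_def, he.apply_vac r hr]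
  have fwdDiff_g_of_nonneg (r : ℤ) (hr : 0 ≤ r) : fwdDiff 1 g r = 0 := by
    rw [fwdDiff, g_of_nonneg hr, g_of_nonneg (by lia), hd.mkQ_antidiagonal_succ he hT hr, sub_self]
  obtain ⟨N, hN⟩ := hloc
  have iter_g : (fwdDiff 1)^[N] g = 0 := fwdDiff_iter_comp_eq_zero hN (φ := fun r ↦ (-1 - r, r))
    (ψ := fun _ ↦ (π ∘ₗ LinearMap.applyₗ v).toAddMonoidHom)
    (fun r ↦ by ext <;> simp; ring) (fun _ ↦ rfl)
  have fwdDiff_g : fwdDiff 1 g = 0 := by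
    refine eq_zero_of_fwdDiff_iter_eq_zero (n := N) ?_ fwdDiff_g_of_nonneg
    rw [← Function.iterate_succ_apply, Function.iterate_succ_apply', iter_g]
    exact fwdDiff_const 1 0
  have g_neg_one : g (-1) = π (d 0 (e (-1) v)) := by
    simp [g, Ring.lie_def, hd.apply_vac 0 le_rfl]
  have g_zero_eq : g 0 = g (-1) := sub_eq_zero.mp (congrFun fwdDiff_g (-1))
  rw [g_neg_one, g_of_nonneg le_rfl] at g_zero_eq
  rw [← Submodule.ker_mkQ (LinearMap.range T), LinearMap.mem_ker, map_add]
  exact eq_neg_iff_add_eq_zero.mp g_zero_eq.symm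

end IsCreativeField

namespace UniformVertexAlgebra

variable {V : Type*} [AddCommGroup V] [Module ℂ V] (A : UniformVertexAlgebra V)

/-- The field `a(z) = ∑ a(n) z^{-n-1}` of the state `a`, as its sequence of modes. -/
def field (a : V) (n : ℤ) : Module.End ℂ V := A.mul n a

lemma isCreativeField (a : V) : IsCreativeField A.T A.vac (A.field a) where
  translation n := LinearMap.ext fun c ↦ A.translation n a c
  apply_vac n := A.creation n a

lemma mutuallyLocal (a b : V) : MutuallyLocal (A.field a) (A.field b) := by
  obtain ⟨N, hN⟩ := A.locality a b
  refine mutuallyLocal_of_sum_eq_zero (N := N) fun p q ↦ LinearMap.ext fun c ↦ ?_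
  simpa [← Int.cast_smul_eq_zsmul ℂ, Ring.lie_def, field] using hN p q c

lemma mul_zero_skew (a b : V) : A.mul 0 a b + A.mul 0 b a ∈ LinearMap.range A.T := by
  simpa only [field, A.create_self] using
    (A.isCreativeField a).skew_symm (A.isCreativeField b) A.T_vac (A.mutuallyLocal a b)

lemma mul_zero_self (a : V) : A.mul 0 a a ∈ LinearMap.range A.T := by
  have double_mem := A.mul_zero_skew a a
  rwa [← two_smul ℂ, Submodule.smul_mem_iff _ two_ne_zero] at double_mem

lemma mul_zero_jacobi (a b c : V) :
    A.mul 0 a (A.mul 0 b c) - A.mul 0 b (A.mul 0 a c) - A.mul 0 (A.mul 0 a b) c ∈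
      LinearMap.range A.T := by
  have bracket_skew := ((A.isCreativeField a).lie_zero (A.isCreativeField b)).skew_symm
    (A.isCreativeField c) A.T_vac
    ((A.mutuallyLocal b a).lie (A.mutuallyLocal a c) (A.mutuallyLocal b c) 0)
  simp only [Ring.lie_def, LinearMap.sub_apply, Module.End.mul_apply, field, A.create_self,
    A.creation 0 a le_rfl, map_zero, sub_zero] at bracket_skew
  have sub_skew := sub_mem bracket_skew (A.mul_zero_skew (A.mul 0 a b) c)
  rwa [add_sub_add_right_eq_sub] at sub_skew

lemma mul_zero_T (a b : V) : A.mul 0 a (A.T b) = A.T (A.mul 0 a b) :=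
  (sub_eq_zero.mp (by simpa using A.translation 0 a b)).symm

lemma mul_zero_T_mem (a b : V) : A.mul 0 (A.T a) b ∈ LinearMap.range A.T := by
  have skew := A.mul_zero_skew (A.T a) b
  rwa [A.mul_zero_T, Submodule.add_mem_iff_left _ (LinearMap.mem_range_self _ _)] at skew

/-- The bracket on `V / L₋₁V` induced by `(a, b) ↦ a(0)b`. -/
def quotientBracket : (V ⧸ LinearMap.range A.T) →ₗ[ℂ] (V ⧸ LinearMap.range A.T) →ₗ[ℂ]
    (V ⧸ LinearMap.range A.T) :=
  ((A.mul 0).compr₂ (LinearMap.range A.T).mkQ).liftQ₂ (LinearMap.range A.T) (LinearMap.range A.T)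
    (by
      rintro _ ⟨a, rfl⟩
      refine LinearMap.ext fun b ↦ ?_
      simpa using A.mul_zero_T_mem a b)
    (by
      rintro _ ⟨b, rfl⟩
      refine LinearMap.ext fun a ↦ ?_
      simp [A.mul_zero_T])

lemma quotientBracket_mkQ (a b : V) :
    A.quotientBracket ((LinearMap.range A.T).mkQ a) ((LinearMap.range A.T).mkQ b) =
      (LinearMap.range A.T).mkQ (A.mul 0 a b) := rfl

end UniformVertexAlgebra

/-- the operation `(a,b) ↦ a(0)b` descends to the quotient `Q = V / L₋₁V`,
and the induced bracket makes `Q` a complex Lie algebra: it is bilinear (a linear map in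
each variable), alternating, and satisfies the Jacobi identity (in Leibniz form). -/
theorem quotient_lie_algebra {V : Type*} [AddCommGroup V] [Module ℂ V]
    (A : UniformVertexAlgebra V) :
    (∀ a a' b b' : V,
        (LinearMap.range A.T).mkQ a = (LinearMap.range A.T).mkQ a' →
        (LinearMap.range A.T).mkQ b = (LinearMap.range A.T).mkQ b' →
        (LinearMap.range A.T).mkQ (A.mul 0 a b) =
          (LinearMap.range A.T).mkQ (A.mul 0 a' b')) ∧
    ∃ bracket : (V ⧸ LinearMap.range A.T) →ₗ[ℂ]
        (V ⧸ LinearMap.range A.T) →ₗ[ℂ] (V ⧸ LinearMap.range A.T),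
      (∀ a b : V,
        bracket ((LinearMap.range A.T).mkQ a) ((LinearMap.range A.T).mkQ b) =
          (LinearMap.range A.T).mkQ (A.mul 0 a b)) ∧
      (∀ x, bracket x x = 0) ∧
      (∀ x y z, bracket x (bracket y z) =
        bracket (bracket x y) z + bracket y (bracket x z)) := by
  have mkQ_surjective := (LinearMap.range A.T).mkQ_surjective
  refine ⟨fun a a' b b' ha hb ↦ ?_, A.quotientBracket, A.quotientBracket_mkQ, fun x ↦ ?_,
    fun x y z ↦ ?_⟩
  · rw [← A.quotientBracket_mkQ, ha, hb, A.quotientBracket_mkQ]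
  · obtain ⟨a, rfl⟩ := mkQ_surjective x
    rw [A.quotientBracket_mkQ]
    exact (Submodule.Quotient.mk_eq_zero _).mpr (A.mul_zero_self a)
  · obtain ⟨a, rfl⟩ := mkQ_surjective x
    obtain ⟨b, rfl⟩ := mkQ_surjective y
    obtain ⟨c, rfl⟩ := mkQ_surjective z
    simp only [A.quotientBracket_mkQ]
    rw [← sub_eq_zero, ← map_add, ← map_sub, sub_add_eq_sub_sub_swap]
    exact (Submodule.Quotient.mk_eq_zero _).mpr (A.mul_zero_jacobi a b c)
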